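/- Let V be a finite-dimensional vector space over a field k, let R ⊆ V ⊗ V be a subspace, and let R^⊥ ⊆ V* ⊗ V* be its annihilator under the evaluation pairing. Let {v_i} be a basis of V with dual basis {f_i}, and let ι₂ = ∑_{i,j} (f_i ⊗ f_j) ⊗ (v_i ⊗ v_j) ∈ (V* ⊗ V*) ⊗ (V ⊗ V) be the element corresponding to the identity of V ⊗ V. Then ι₂ lies in the subspace R^⊥ ⊗ (V ⊗ V) + (V* ⊗ V*) ⊗ R. -/

import Mathlib

open TensorProduct Module

theorem aux_swap {k W E κ : Type*} [Field k] [AddCommMonoid W] [Module k W]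
    [AddCommMonoid E] [Module k E] [Fintype κ] (c : Basis κ k W)
    (D : E ≃ₗ[k] Dual k W) (q : W →ₗ[k] W) :
    ∑ a, D.symm (c.coord a) ⊗ₜ[k] q (c a) = ∑ a, D.symm (c.coord a ∘ₗ q) ⊗ₜ[k] c a := by
  have h1 : ∀ a, c.coord a ∘ₗ q = ∑ d, c.coord a (q (c d)) • c.coord d := by
    intro a
    classical
    apply c.ext
    intro i
    simp [Finsupp.single_apply]
  have h2 : ∀ a, q (c a) = ∑ d, c.coord d (q (c a)) • c d := fun a => (c.sum_repr _).symm
  calc _ = ∑ a, ∑ d, c.coord d (q (c a)) • (D.symm (c.coord a) ⊗ₜ[k] c d) := by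
        refine Finset.sum_congr rfl fun a _ => ?_
        conv_lhs => rw [h2 a]
        simp only [TensorProduct.tmul_sum, TensorProduct.tmul_smul]
    _ = _ := by
        rw [Finset.sum_comm]
        refine Finset.sum_congr rfl fun a _ => ?_
        rw [h1 a, map_sum, TensorProduct.sum_tmul]
        simp only [map_smul, TensorProduct.smul_tmul']

/-- For a basis `{v_i}` of `V` with dual basis `{f_i}`, the element
`ι₂ = ∑_{i,j} (f_i ⊗ f_j) ⊗ (v_i ⊗ v_j)` lies in `R^⊥ ⊗ (V ⊗ V) + (V* ⊗ V*) ⊗ R`. -/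
theorem stmt5 {k V ι : Type*} [Field k] [AddCommGroup V] [Module k V] [FiniteDimensional k V]
    [Fintype ι] (b : Basis ι k V) (R : Submodule k (V ⊗[k] V)) :
    (∑ i : ι, ∑ j : ι, (b.coord i ⊗ₜ[k] b.coord j) ⊗ₜ[k] (b i ⊗ₜ[k] b j)) ∈
      LinearMap.range (TensorProduct.map
          (Submodule.comap (TensorProduct.dualDistrib k V V) R.dualAnnihilator).subtype
          (LinearMap.id : V ⊗[k] V →ₗ[k] V ⊗[k] V)) ⊔
        LinearMap.range (TensorProduct.map
          (LinearMap.id : Dual k V ⊗[k] Dual k V →ₗ[k] Dual k V ⊗[k] Dual k V)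
          R.subtype) := by
  obtain ⟨g, hg⟩ := R.subtype.exists_leftInverse_of_injective R.ker_subtype
  set c := b.tensorProduct b with hc
  set D := TensorProduct.dualDistribEquiv k V V with hD
  have hDa : ∀ e, D e = TensorProduct.dualDistrib k V V e := fun e => rfl
  have he : ∀ a : ι × ι, D.symm (c.coord a) = b.coord a.1 ⊗ₜ[k] b.coord a.2 := by
    intro a
    rw [LinearEquiv.symm_apply_eq, hDa]
    apply TensorProduct.ext'
    intro x y
    obtain ⟨i, j⟩ := a
    simp [hc, Basis.tensorProduct_repr_tmul_apply, mul_comm]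
  set q : V ⊗[k] V →ₗ[k] V ⊗[k] V := LinearMap.id - R.subtype ∘ₗ g with hq
  have hsum : (∑ i : ι, ∑ j : ι, (b.coord i ⊗ₜ[k] b.coord j) ⊗ₜ[k] (b i ⊗ₜ[k] b j)) =
      ∑ a, D.symm (c.coord a ∘ₗ q) ⊗ₜ[k] c a +
      ∑ a, D.symm (c.coord a) ⊗ₜ[k] (R.subtype (g (c a))) := by
    rw [← aux_swap c D q, ← Finset.sum_add_distrib, ← Fintype.sum_prod_type']
    refine Finset.sum_congr rfl fun a _ => ?_
    rw [← TensorProduct.tmul_add, he]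
    simp [hq, hc, Basis.tensorProduct_apply']
  rw [hsum]
  refine Submodule.add_mem_sup (Submodule.sum_mem _ fun a _ => ?_)
    (Submodule.sum_mem _ fun a _ => ?_)
  · refine ⟨(⟨D.symm (c.coord a ∘ₗ q), ?_⟩ :
      Submodule.comap (TensorProduct.dualDistrib k V V) R.dualAnnihilator) ⊗ₜ[k] c a, ?_⟩
    · rw [Submodule.mem_comap, ← hDa, LinearEquiv.apply_symm_apply,
        Submodule.mem_dualAnnihilator]
      intro w hw
      have h3 : g w = ⟨w, hw⟩ := LinearMap.congr_fun hg ⟨w, hw⟩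
      have h4 : q w = 0 := by simp [hq, h3]
      rw [LinearMap.comp_apply, h4, map_zero]
    · rw [TensorProduct.map_tmul]; rfl
  · exact ⟨D.symm (c.coord a) ⊗ₜ[k] g (c a), by rw [TensorProduct.map_tmul]; rfl⟩
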